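/- Let Q be the optimal soft Q-function for reward r, let f : ℝ → ℝ satisfy: (1) f is convex; (2i) f(x+y) ≤ f(x) + f(y); (2ii) f(γx) ≤ γ·f(x); (3) f(log ∑_a π₀(a|s)·exp 𝒬(s,a)) ≤ log ∑_a π₀(a|s)·exp f(𝒬(s,a)) for every 𝒬 : S × A → ℝ and every s, and let Q̃ be the optimal soft Q-function for reward (s,a) ↦ f(r(s,a)). Define V_f(s) = log ∑_a π₀(a|s)·exp f(Q(s,a)), let C satisfy C(s,a) = f(r(s,a)) + γ·∑_{s'} p(s'|s,a)·V_f(s') − f(Q(s,a)) + γ·∑_{s'} p(s'|s,a)·max_{a'} C(s',a'), and define the policy π_f(a|s) = π₀(a|s)·exp(f(Q(s,a)) − V_f(s)). Let Q̃^{π_f} be the soft value of π_f on the transformed task, i.e. the function satisfying Q̃^{π_f}(s,a) = f(r(s,a)) + γ·∑_{s'} p(s'|s,a)·∑_{a'} π_f(a'|s')·[Q̃^{π_f}(s',a') − log(π_f(a'|s')/π₀(a'|s'))], and let D satisfy D(s,a) = r_D(s,a) + γ·∑_{s'} p(s'|s,a)·∑_{a'} π_f(a'|s')·D(s',a') where r_D(s,a)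 = γ·∑_{s'} p(s'|s,a)·[max_{b∈A}(f(Q(s',b)) + C(s',b)) − V_f(s')]. Then for all (s,a): Q̃(s,a) − Q̃^{π_f}(s,a) ≤ D(s,a). -/

import Mathlib

/-!
Every comparison below is a maximum principle for a discounted Bellman operator
(`le_zero_of_discounted`): if an upper bound `K` for `u` always improves to `γ * K`, then `u ≤ 0`.

* `f ∘ Q` is a subsolution of the soft Bellman equation for the reward `f ∘ r`, by subadditivity,
  subhomogeneity, Jensen's inequality and the log-sum-exp condition on `f`; hence `f ∘ Q ≤ Qt`.
* `f ∘ Q + C` is a supersolution, because `softV (f ∘ Q + C) ≤ Vf + max C`; hence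
  `Qt ≤ f ∘ Q + C`.
* Since `log (πf / π0) = f ∘ Q - Vf`, the regret `Qt - Qpf` satisfies the policy evaluation
  recursion for `πf` with reward `γ E[softV Qt - Vf + ∑ πf (f ∘ Q - Qt)]`. The two bounds above,
  with `softV Qt ≤ max Qt`, show this reward is at most `rD`, so the regret is at most `D`.
-/

open Finset

/-- Maximum of a real-valued function over a nonempty finite action set. -/
noncomputable def amax {A : Type*} [Fintype A] [Nonempty A] (g : A → ℝ) : ℝ :=
  Finset.univ.sup' Finset.univ_nonempty g

/-- The soft (log-sum-exp) value of `g` under the prior action distribution `π0`. -/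
noncomputable def softV {A : Type*} [Fintype A] (π0 : A → ℝ) (g : A → ℝ) : ℝ :=
  Real.log (∑ a, π0 a * Real.exp (g a))

/-- Maximum principle: a function on a finite set all of whose upper bounds can be multiplied by
`γ < 1` is nonpositive (apply the hypothesis to its maximum). -/
lemma le_zero_of_discounted {S A : Type*} [Fintype S] [Fintype A] [Nonempty S] [Nonempty A]
    {γ : ℝ} (hγ1 : γ < 1) (u : S → A → ℝ)
    (h : ∀ K, (∀ s a, u s a ≤ K) → ∀ s a, u s a ≤ γ * K) : ∀ s a, u s a ≤ 0 := by
  obtain ⟨⟨s₀, a₀⟩, hmax⟩ := Finite.exists_max (fun x : S × A => u x.1 x.2)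
  have hle : ∀ s a, u s a ≤ u s₀ a₀ := fun s a => hmax (s, a)
  have h0 := h _ hle s₀ a₀
  intro s a
  have := hle s a
  nlinarith

lemma sum_mul_le_sum_mul_add {ι : Type*} [Fintype ι] {w : ι → ℝ} (hw : ∀ i, 0 ≤ w i)
    (hw1 : ∑ i, w i = 1) {g h : ι → ℝ} {K : ℝ} (hgh : ∀ i, g i ≤ h i + K) :
    ∑ i, w i * g i ≤ ∑ i, w i * h i + K := by
  calc ∑ i, w i * g i ≤ ∑ i, w i * (h i + K) :=
        Finset.sum_le_sum fun i _ => mul_le_mul_of_nonneg_left (hgh i) (hw i)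
    _ = ∑ i, w i * h i + K := by
        simp only [mul_add, Finset.sum_add_distrib, ← Finset.sum_mul, hw1, one_mul]

lemma sum_mul_exp_pos {A : Type*} [Fintype A] [Nonempty A] {w : A → ℝ} (hw : ∀ a, 0 < w a)
    (g : A → ℝ) : 0 < ∑ a, w a * Real.exp (g a) :=
  Finset.sum_pos (fun a _ => mul_pos (hw a) (Real.exp_pos _)) Finset.univ_nonempty

/-- Combines two properties of the soft value: it is monotone and commutes with adding constants. -/
lemma softV_le_softV_add {A : Type*} [Fintype A] [Nonempty A] {w : A → ℝ} (hw : ∀ a, 0 < w a)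
    {g h : A → ℝ} {K : ℝ} (hgh : ∀ a, g a ≤ h a + K) : softV w g ≤ softV w h + K := by
  unfold softV
  have hpos := sum_mul_exp_pos hw h
  rw [← Real.log_exp K, ← Real.log_mul hpos.ne' (Real.exp_pos K).ne',
    Finset.sum_mul]
  refine Real.log_le_log (sum_mul_exp_pos hw g) (Finset.sum_le_sum fun a _ => ?_)
  rw [mul_assoc, ← Real.exp_add]
  exact mul_le_mul_of_nonneg_left (Real.exp_le_exp.2 (hgh a)) (hw a).le

lemma le_amax {A : Type*} [Fintype A] [Nonempty A] (g : A → ℝ) (a : A) : g a ≤ amax g :=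
  Finset.le_sup' g (Finset.mem_univ a)

/-- **Regret bound for the zero-shot policy, convex conditions, entropy-regularized RL
(Lemma 5.2).** -/
theorem convex_conditions_regret_entreg_rl
    {S A : Type*} [Fintype S] [Fintype A] [Nonempty S] [Nonempty A]
    (p : S → A → S → ℝ)
    (hp_nonneg : ∀ s a s', 0 ≤ p s a s')
    (hp_sum : ∀ s a, ∑ s', p s a s' = 1)
    (γ : ℝ) (hγ0 : 0 < γ) (hγ1 : γ < 1)
    -- prior policy
    (π0 : S → A → ℝ)
    (hπ0_pos : ∀ s a, 0 < π0 s a)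
    (hπ0_sum : ∀ s, ∑ a, π0 s a = 1)
    (r : S → A → ℝ)
    -- Q is the optimal soft Q-function for reward r
    (Q : S → A → ℝ)
    (hQ : ∀ s a, Q s a = r s a + γ * ∑ s', p s a s' * softV (π0 s') (fun a' => Q s' a'))
    -- the transformation function f and its conditions
    (f : ℝ → ℝ)
    (hf_convex : ConvexOn ℝ Set.univ f)
    (hf_subadd : ∀ x y, f (x + y) ≤ f x + f y)
    (hf_subhom : ∀ x, f (γ * x) ≤ γ * f x)
    (hf_lse : ∀ (𝒬 : S → A → ℝ) (s : S),
      f (softV (π0 s) (fun a => 𝒬 s a)) ≤ softV (π0 s) (fun a => f (𝒬 s a)))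
    -- Q̃ is the optimal soft Q-function for the transformed reward f ∘ r
    (Qt : S → A → ℝ)
    (hQt : ∀ s a, Qt s a = f (r s a) + γ * ∑ s', p s a s' * softV (π0 s') (fun a' => Qt s' a'))
    -- V_f and the fixed point C
    (Vf : S → ℝ)
    (hVf : ∀ s, Vf s = softV (π0 s) (fun a => f (Q s a)))
    (C : S → A → ℝ)
    (hC : ∀ s a, C s a = f (r s a) + γ * (∑ s', p s a s' * Vf s') - f (Q s a)
      + γ * ∑ s', p s a s' * amax (fun a' => C s' a'))
    -- the zero-shot policy π_f
    (πf : S → A → ℝ)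
    (hπf : ∀ s a, πf s a = π0 s a * Real.exp (f (Q s a) - Vf s))
    -- Q̃^{π_f}, the soft value of π_f on the transformed task
    (Qpf : S → A → ℝ)
    (hQpf : ∀ s a, Qpf s a = f (r s a) + γ * ∑ s', p s a s' *
      ∑ a', πf s' a' * (Qpf s' a' - Real.log (πf s' a' / π0 s' a')))
    -- the auxiliary reward r_D and the fixed point D
    (rD : S → A → ℝ)
    (hrD : ∀ s a, rD s a = γ * ∑ s', p s a s' *
      (amax (fun b => f (Q s' b) + C s' b) - Vf s'))
    (D : S → A → ℝ)
    (hD : ∀ s a, D s a = rD s a + γ * ∑ s', p s a s' * ∑ a', πf s' a' * D s' a') :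
    ∀ s a, Qt s a - Qpf s a ≤ D s a := by
  have hlow : ∀ s a, f (Q s a) - Qt s a ≤ 0 := by
    refine le_zero_of_discounted hγ1 _ fun K hK s a => ?_
    have h1 : f (Q s a) ≤ f (r s a)
        + f (γ * ∑ s', p s a s' * softV (π0 s') (fun a' => Q s' a')) := by
      conv_lhs => rw [hQ s a]
      exact hf_subadd _ _
    have h2 := hf_subhom (∑ s', p s a s' * softV (π0 s') (fun a' => Q s' a'))
    have hJensen : f (∑ s', p s a s' * softV (π0 s') (fun a' => Q s' a'))
        ≤ ∑ s', p s a s' * f (softV (π0 s') (fun a' => Q s' a')) := by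
      simpa only [smul_eq_mul] using
        hf_convex.map_sum_le (t := Finset.univ) (w := p s a)
          (p := fun s' => softV (π0 s') (fun a' => Q s' a'))
          (fun s' _ => hp_nonneg s a s') (hp_sum s a) (fun _ _ => Set.mem_univ _)
    have hsoft : ∑ s', p s a s' * f (softV (π0 s') (fun a' => Q s' a'))
        ≤ ∑ s', p s a s' * softV (π0 s') (fun a' => Qt s' a') + K :=
      sum_mul_le_sum_mul_add (hp_nonneg s a) (hp_sum s a) fun s' =>
        (hf_lse Q s').trans
          (softV_le_softV_add (hπ0_pos s') fun a' => by linarith [hK s' a'])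
    have h3 := mul_le_mul_of_nonneg_left (hJensen.trans hsoft) hγ0.le
    linarith [hQt s a]
  have hupp : ∀ s a, Qt s a - (f (Q s a) + C s a) ≤ 0 := by
    refine le_zero_of_discounted hγ1 _ fun K hK s a => ?_
    have hsoft : ∑ s', p s a s' * softV (π0 s') (fun a' => Qt s' a')
        ≤ ∑ s', p s a s' * (Vf s' + amax (fun a' => C s' a')) + K :=
      sum_mul_le_sum_mul_add (hp_nonneg s a) (hp_sum s a) fun s' => by
        have := softV_le_softV_add (hπ0_pos s') (g := fun a' => Qt s' a')
          (h := fun a' => f (Q s' a')) (K := amax (fun a' => C s' a') + K)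
          fun a' => by linarith [hK s' a', le_amax (fun a' => C s' a') a']
        linarith [hVf s']
    simp only [mul_add, Finset.sum_add_distrib] at hsoft
    have h3 := mul_le_mul_of_nonneg_left hsoft hγ0.le
    linarith [hQt s a, hC s a]
  have hπf_nonneg : ∀ s a, 0 ≤ πf s a := fun s a => by
    rw [hπf]
    exact mul_nonneg (hπ0_pos s a).le (Real.exp_pos _).le
  have hπf_sum : ∀ s, ∑ a, πf s a = 1 := fun s => by
    have hpos := sum_mul_exp_pos (hπ0_pos s) (fun a => f (Q s a))
    have hexp : Real.exp (Vf s) = ∑ a, π0 s a * Real.exp (f (Q s a)) := by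
      rw [hVf, softV, Real.exp_log hpos]
    simp only [hπf, Real.exp_sub, ← mul_div_assoc, ← Finset.sum_div]
    rw [hexp, div_self hpos.ne']
  have hlog : ∀ s a, Real.log (πf s a / π0 s a) = f (Q s a) - Vf s := fun s a => by
    rw [hπf, mul_div_cancel_left₀ _ (hπ0_pos s a).ne', Real.log_exp]
  have hVmax : ∀ s, softV (π0 s) (fun a => Qt s a) ≤ amax (fun b => f (Q s b) + C s b) :=
    fun s => by
      have h := softV_le_softV_add (hπ0_pos s) (g := fun a => Qt s a) (h := fun _ => 0)
        (K := amax (fun b => f (Q s b) + C s b))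
        fun a => by linarith [hupp s a, le_amax (fun b => f (Q s b) + C s b) a]
      have h0 : softV (π0 s) (fun _ => 0) = 0 := by simp [softV, hπ0_sum]
      linarith
  have hmain : ∀ s a, Qt s a - Qpf s a - D s a ≤ 0 := by
    refine le_zero_of_discounted hγ1 _ fun K hK s a => ?_
    have hsum : ∑ s', p s a s' * softV (π0 s') (fun a' => Qt s' a')
        ≤ ∑ s', p s a s' * (∑ a', πf s' a' * (Qpf s' a' - Real.log (πf s' a' / π0 s' a'))
          + ((amax (fun b => f (Q s' b) + C s' b) - Vf s') + ∑ a', πf s' a' * D s' a')) + K :=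
      sum_mul_le_sum_mul_add (hp_nonneg s a) (hp_sum s a) fun s' => by
        -- `f (Q s' a') ≤ Qt s' a' ≤ Qpf s' a' + D s' a' + K`, averaged over `πf`.
        have hpol : ∑ a', πf s' a' * 0
            ≤ ∑ a', πf s' a' * ((Qpf s' a' - Real.log (πf s' a' / π0 s' a')) + D s' a')
              + (K - Vf s') :=
          sum_mul_le_sum_mul_add (hπf_nonneg s') (hπf_sum s') fun a' => by
            rw [hlog]
            linarith [hlow s' a', hK s' a']
        simp only [mul_zero, Finset.sum_const_zero, mul_add, Finset.sum_add_distrib] at hpol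
        linarith [hVmax s']
    simp only [mul_add, Finset.sum_add_distrib] at hsum
    have h3 := mul_le_mul_of_nonneg_left hsum hγ0.le
    linarith [hQt s a, hQpf s a, hD s a, hrD s a]
  intro s a
  linarith [hmain s a]
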